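/- Let n ≥ 3 and let K ⊆ ℝⁿ be a closed convex set with nonempty interior, K ≠ ℝⁿ, that is strictly convex and regular. Let δ : S^{n−1} → ℝ be continuous, H(u) = {x ∈ ℝⁿ : ⟨x, u⟩ = δ(u)}, and assume that for every u ∈ S^{n−1} the set frontier K ∩ H(u) is an (n−1)-dimensional convex quadric in H(u). Then there exist u₁, u₂ ∈ S^{n−1} such that frontier K ∩ H(u₁) and frontier K ∩ H(u₂) are (n−1)-dimensional ellipsoids whose intersection (frontier K ∩ H(u₁)) ∩ (frontier K ∩ H(u₂)) is an (n−2)-dimensional ellipsoid. -/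

import Mathlib

open Set Metric RealInnerProductSpace

noncomputable section

/-- Euclidean n-space. -/
abbrev En (n : ℕ) := EuclideanSpace ℝ (Fin n)

/-- A quadric surface in ℝⁿ: the zero set of a quadratic polynomial whose quadratic
part (given by a symmetric matrix) is not identically zero. -/
def IsQuadricSurface {n : ℕ} (Q : Set (En n)) : Prop :=
  ∃ (a : Matrix (Fin n) (Fin n) ℝ) (b : Fin n → ℝ) (c : ℝ),
    a.IsSymm ∧ a ≠ 0 ∧
    Q = {x : En n | (∑ i, ∑ k, a i k * x i * x k) + 2 * (∑ i, b i * x i) + c = 0}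

/-- A real quadric surface: a nonempty quadric surface. -/
def IsRealQuadricSurface {n : ℕ} (Q : Set (En n)) : Prop :=
  IsQuadricSurface Q ∧ Q.Nonempty

/-- The set of connected components of a subset `F` of a topological space. -/
def componentsIn {α : Type*} [TopologicalSpace α] (F : Set α) : Set (Set α) :=
  {C | ∃ x ∈ F, C = connectedComponentIn F x}

/-- A convex quadric: the frontier of a convex connected component of the complement
of a real quadric surface. -/
def IsConvexQuadric {n : ℕ} (S : Set (En n)) : Prop :=
  ∃ Q U : Set (En n), IsRealQuadricSurface Q ∧ U ∈ componentsIn Qᶜ ∧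
    Convex ℝ U ∧ S = frontier U
/-- `S` is an (n−1)-dimensional convex quadric in the hyperplane `H ⊆ ℝⁿ`:
for some affine isometry φ : ℝ^{n−1} → ℝⁿ with image `H`, the set φ⁻¹(S) is a
convex quadric in ℝ^{n−1}. -/
def IsConvexQuadricIn {n : ℕ} (H S : Set (En n)) : Prop :=
  S ⊆ H ∧ ∃ φ : En (n - 1) →ᵃⁱ[ℝ] En n,
    Set.range (φ : En (n - 1) → En n) = H ∧ IsConvexQuadric ((φ : En (n - 1) → En n) ⁻¹' S)

/-- The hyperplane H(u) = {x : ⟨x, u⟩ = δ(u)} associated to a unit vector u. -/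
def sphHyp {n : ℕ} (δ : sphere (0 : En n) 1 → ℝ) (u : sphere (0 : En n) 1) : Set (En n) :=
  {x : En n | ⟪x, (u : En n)⟫ = δ u}
/-- `G` is a supporting hyperplane of `K` at the point `x`. -/
def IsSupportHyperplaneAt {n : ℕ} (K : Set (En n)) (x : En n) (G : Set (En n)) : Prop :=
  (∃ (v : En n) (c : ℝ), v ≠ 0 ∧ G = {y : En n | ⟪y, v⟫ = c}) ∧
    x ∈ G ∧ (G ∩ K).Nonempty ∧ G ∩ interior K = ∅

/-- `K` is strictly convex: its frontier contains no segment with distinct endpoints. -/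
def IsStrictlyConvexSet {n : ℕ} (K : Set (En n)) : Prop :=
  ∀ x ∈ frontier K, ∀ y ∈ frontier K, x ≠ y → ¬ segment ℝ x y ⊆ frontier K

/-- `K` is regular: every frontier point lies on exactly one supporting hyperplane. -/
def IsRegularSet {n : ℕ} (K : Set (En n)) : Prop :=
  ∀ x ∈ frontier K, ∃! G : Set (En n), IsSupportHyperplaneAt K x G
/-- A k-dimensional ellipsoid in ℝⁿ: the image of the unit sphere of ℝ^k under an
injective affine map ℝ^k → ℝⁿ. -/
def IsEllipsoidDim {n : ℕ} (k : ℕ) (S : Set (En n)) : Prop :=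
  ∃ f : En k →ᵃ[ℝ] En n, Function.Injective f ∧ S = f '' sphere (0 : En k) 1

/-!
Strict convexity makes every frontier point exposed, so the nonzero vectors of the asymptotic cone
of `K` lie in an open half-space. Hence there is a direction `u₀` such that `K` has bounded
sections orthogonal to all directions `u` near `u₀`. If such a bounded section in `H u` passes
through an interior point `x` of `K`, the quadratic function `f` vanishing on its frontier has two
roots on opposite sides of `x` on each line through `x`. This makes its quadratic part definite of
sign opposite to `f x`, and therefore the section and all its affine subsections through `x` are
ellipsoids.

It remains to choose two directions near `u₀` whose hyperplanes meet in an interior point of `K`.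
Each `H u` meets the interior, because its section of the frontier has two points and the frontier
contains no segment; take `p` interior on `H u₀`. Tilting `u₀` by a small tangent vector `w` moves
the point where the hyperplane crosses the line `p + ℝ u₀` continuously. By the intermediate value
theorem on the sphere `‖w‖ = r`, connected because `n ≥ 3`, some pair `w`, `-w` of tilts crosses the
line at the same point.
-/

open Filter Topology Bornology Pointwise

section Frontier

theorem nonempty_inter_frontier_of_isPreconnected {X : Type*} [TopologicalSpace X] {s t : Set X}
    (ht : IsPreconnected t) (hts : (t ∩ s).Nonempty) (hts' : (t ∩ sᶜ).Nonempty) :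
    (t ∩ frontier s).Nonempty := by
  rw [← not_disjoint_iff_nonempty_inter]
  intro hdisj
  have hcover : t ⊆ interior s ∪ interior sᶜ := by
    rw [← compl_frontier_eq_union_interior]
    exact hdisj.subset_compl_right
  have hsep : Disjoint (interior s) (interior sᶜ) :=
    disjoint_compl_right.mono interior_subset interior_subset
  rcases ht.subset_or_subset isOpen_interior isOpen_interior hsep hcover with hsub | hsub
  · obtain ⟨y, hyt, hys⟩ := hts'
    exact hys (interior_subset (hsub hyt))
  · obtain ⟨x, hxt, hxs⟩ := hts
    exact interior_subset (hsub hxt) hxs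

theorem frontier_connectedComponentIn_subset {X : Type*} [TopologicalSpace X]
    [LocallyConnectedSpace X] {F : Set X} (hF : IsOpen F) (x : X) :
    frontier (connectedComponentIn F x) ⊆ Fᶜ := by
  intro y hy hyF
  rw [hF.connectedComponentIn.frontier_eq] at hy
  obtain ⟨z, hzy, hzx⟩ := mem_closure_iff.1 hy.1 _ hF.connectedComponentIn
    (mem_connectedComponentIn hyF)
  apply hy.2
  rw [connectedComponentIn_eq hzx, ← connectedComponentIn_eq hzy]
  exact mem_connectedComponentIn hyF

variable {E : Type*} [NormedAddCommGroup E] [NormedSpace ℝ E]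

theorem exists_pos_add_smul_mem_frontier {A : Set E} (hA : IsBounded A) {x v : E}
    (hx : x ∈ interior A) (hv : v ≠ 0) : ∃ t : ℝ, 0 < t ∧ x + t • v ∈ frontier A := by
  let ray : Set E := (fun t : ℝ => x + t • v) '' Ici 0
  have hray : IsPreconnected ray :=
    isPreconnected_Ici.image _ (Continuous.continuousOn (by fun_prop))
  have hleave : (ray ∩ Aᶜ).Nonempty := by
    obtain ⟨R, hR⟩ := hA.subset_closedBall x
    refine ⟨_, ⟨(|R| + 1) / ‖v‖, by rw [mem_Ici]; positivity, rfl⟩, fun hmem => ?_⟩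
    have hle := hR hmem
    rw [mem_closedBall, dist_eq_norm, add_sub_cancel_left, norm_smul, Real.norm_eq_abs,
      abs_of_nonneg (by positivity), div_mul_cancel₀ _ (norm_ne_zero_iff.2 hv)] at hle
    linarith [le_abs_self R]
  obtain ⟨-, ⟨t, ht, rfl⟩, hmem⟩ := nonempty_inter_frontier_of_isPreconnected hray
    ⟨x, ⟨0, self_mem_Ici, by simp⟩, interior_subset hx⟩ hleave
  refine ⟨t, lt_of_le_of_ne ht ?_, hmem⟩
  rintro rfl
  exact hmem.2 (by simpa using hx)

theorem nontrivial_frontier_of_isOpen_of_convex (hE : 1 < Module.rank ℝ E) {U : Set E}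
    (hU : IsOpen U) (hconv : Convex ℝ U) (hne : U.Nonempty) (huniv : U ≠ univ) :
    (frontier U).Nontrivial := by
  obtain ⟨p, hp⟩ := nonempty_frontier_iff.2 ⟨hne, huniv⟩
  obtain ⟨x, hx⟩ := hne
  have hpU : p ∉ U := hU.interior_eq ▸ hp.2
  have hxp : x ≠ p := fun h => hpU (h ▸ hx)
  -- The reflection of `x` in `p` is outside `U`, since otherwise `p` would be inside.
  have hreflect : Equiv.pointReflection p x ∉ U := fun hy => hpU <| by
    simpa only [midpoint_pointReflection_right] using hconv.midpoint_mem hx hy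
  obtain ⟨q, hqp, hq⟩ := nonempty_inter_frontier_of_isPreconnected
    (isConnected_compl_singleton_of_one_lt_rank hE p).isPreconnected ⟨x, hxp, hx⟩
    ⟨Equiv.pointReflection p x,
      by simpa [Equiv.pointReflection_apply, sub_eq_zero] using hxp.symm, hreflect⟩
  exact ⟨q, hq, p, hp, hqp⟩

end Frontier

section BoundedSections

variable {E : Type*} [NormedAddCommGroup E] [InnerProductSpace ℝ E]

theorem convex_setOf_inner_eq (v : E) (d : ℝ) : Convex ℝ {x : E | ⟪x, v⟫ = d} :=
  convex_hyperplane ((innerₗ E).flip v).isLinear d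

theorem asymptoticCone_setOf_inner_eq_subset (v : E) (d : ℝ) :
    asymptoticCone ℝ {x : E | ⟪x, v⟫ = d} ⊆ {c | ⟪c, v⟫ = 0} := by
  intro c hc
  have hclosed : IsClosed {x : E | ⟪x, v⟫ = d} := isClosed_eq (by fun_prop) continuous_const
  obtain ⟨x, hx⟩ := asymptoticCone_nonempty.1 ⟨c, hc⟩
  have hmem := (convex_setOf_inner_eq v d).smul_vadd_mem_of_isClosed_of_mem_asymptoticCone
    hclosed zero_le_one hc hx
  simpa [inner_add_left, show ⟪x, v⟫ = d from hx] using hmem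

variable [FiniteDimensional ℝ E]

theorem isBounded_inter_setOf_inner_eq {K : Set E} {v : E}
    (hv : ∀ c ∈ asymptoticCone ℝ K, c ≠ 0 → 0 < ⟪c, v⟫) (d : ℝ) :
    IsBounded (K ∩ {x | ⟪x, v⟫ = d}) := by
  by_contra hunbdd
  obtain ⟨c, hc0, hc⟩ := not_bounded_iff_exists_ne_zero_mem_asymptoticCone.1 hunbdd
  have hpos := hv c (asymptoticCone_mono inter_subset_left hc) hc0
  have hzero := asymptoticCone_setOf_inner_eq_subset v d (asymptoticCone_mono inter_subset_right hc)
  exact hpos.ne' hzero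

theorem isOpen_setOf_forall_asymptoticCone_inner_pos (K : Set E) :
    IsOpen {v : E | ∀ c ∈ asymptoticCone ℝ K, c ≠ 0 → 0 < ⟪c, v⟫} := by
  have hcompact : IsCompact (asymptoticCone ℝ K ∩ sphere 0 1) :=
    (isCompact_sphere (0 : E) 1).inter_left isClosed_asymptoticCone
  refine isOpen_iff_eventually.2 fun v hv => ?_
  have hunit : ∀ᶠ w in 𝓝 v, ∀ c ∈ asymptoticCone ℝ K ∩ sphere 0 1, 0 < ⟪c, w⟫ := by
    refine hcompact.eventually_forall_of_forall_eventually fun c hc => ?_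
    have hcont : Continuous fun p : E × E => ⟪p.2, p.1⟫ := by fun_prop
    exact hcont.continuousAt.eventually
      (lt_mem_nhds (hv c hc.1 (ne_zero_of_mem_unit_sphere ⟨c, hc.2⟩)))
  filter_upwards [hunit] with w hw c hc hc0
  have hpos := hw (‖c‖⁻¹ • c) ⟨smul_mem_asymptoticCone (by positivity) hc,
    by simpa using norm_smul_inv_norm (𝕜 := ℝ) hc0⟩
  rw [real_inner_smul_left] at hpos
  exact pos_of_mul_pos_right hpos (by positivity)

theorem exists_forall_asymptoticCone_inner_pos {K : Set E} (hK : Convex ℝ K)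
    (hexp : ((closure K).exposedPoints ℝ).Nonempty) :
    ∃ v : E, ∀ c ∈ asymptoticCone ℝ K, c ≠ 0 → 0 < ⟪c, v⟫ := by
  obtain ⟨p, hp⟩ := hexp
  obtain ⟨hpK, l, hl⟩ := exposed_point_def.1 hp
  refine ⟨-(InnerProductSpace.toDual ℝ E).symm l, fun c hc hc0 => ?_⟩
  have hmem : c + p ∈ closure K := by
    rw [← asymptoticCone_closure] at hc
    simpa using hK.closure.smul_vadd_mem_of_isClosed_of_mem_asymptoticCone isClosed_closure
      zero_le_one hc hpK
  have hlt : l (c + p) < l p := lt_of_not_ge fun hge => hc0 (by simpa using (hl _ hmem).2 hge)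
  rw [inner_neg_right, real_inner_comm, InnerProductSpace.toDual_symm_apply]
  rw [map_add] at hlt
  linarith

theorem exists_eventually_isBounded_inter_setOf_inner_eq [Nontrivial E] {K : Set E}
    (hK : Convex ℝ K) (hexp : ((closure K).exposedPoints ℝ).Nonempty) :
    ∃ u₀ : sphere (0 : E) 1, ∀ᶠ u : sphere (0 : E) 1 in 𝓝 u₀,
      ∀ d : ℝ, IsBounded (K ∩ {x | ⟪x, (u : E)⟫ = d}) := by
  have hopen := isOpen_setOf_forall_asymptoticCone_inner_pos K
  obtain ⟨v, hv, hv0⟩ := ((dense_compl_singleton (0 : E)).inter_open_nonempty _ hopen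
    (exists_forall_asymptoticCone_inner_pos hK hexp))
  have hnorm : ‖v‖⁻¹ • v ∈ {v : E | ∀ c ∈ asymptoticCone ℝ K, c ≠ 0 → 0 < ⟪c, v⟫} := by
    intro c hc hc0
    rw [real_inner_smul_right]
    exact mul_pos (by simpa using hv0) (hv c hc hc0)
  refine ⟨⟨‖v‖⁻¹ • v, by simpa using norm_smul_inv_norm (𝕜 := ℝ) hv0⟩, ?_⟩
  filter_upwards [continuous_subtype_val.continuousAt.eventually (hopen.eventually_mem hnorm)]
    with u hu
  exact isBounded_inter_setOf_inner_eq hu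

end BoundedSections

section StrictConvexity

theorem IsStrictlyConvexSet.nonempty_interior_inter {n : ℕ} {K H : Set (En n)}
    (hK : IsStrictlyConvexSet K) (hconv : Convex ℝ K) (hH : Convex ℝ H)
    (hnt : (frontier K ∩ H).Nontrivial) : (interior K ∩ H).Nonempty := by
  obtain ⟨x, ⟨hx, hxH⟩, y, ⟨hy, hyH⟩, hxy⟩ := hnt
  obtain ⟨z, hz, hzK⟩ := not_subset.1 (hK x hx y hy hxy)
  have hzcl : z ∈ closure K := hconv.closure.segment_subset hx.1 hy.1 hz
  exact ⟨z, not_not.1 fun hzint => hzK ⟨hzcl, hzint⟩, hH.segment_subset hxH hyH hz⟩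

theorem IsStrictlyConvexSet.frontier_subset_exposedPoints_closure {n : ℕ} {K : Set (En n)}
    (hK : IsStrictlyConvexSet K) (hconv : Convex ℝ K) (hint : (interior K).Nonempty) :
    frontier K ⊆ (closure K).exposedPoints ℝ := by
  intro p hp
  obtain ⟨l, hl⟩ := geometric_hahn_banach_open_point hconv.interior isOpen_interior hp.2
  have hle : ∀ x ∈ closure K, l x ≤ l p := by
    rw [← hconv.closure_interior_eq_closure_of_nonempty_interior hint]
    exact closure_minimal (fun x hx => (hl x hx).le) (isClosed_le l.continuous continuous_const)
  refine exposed_point_def.2 ⟨hp.1, l, fun y hy => ⟨hle y hy, fun hpy => ?_⟩⟩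
  by_contra hyp
  have hface : Convex ℝ {x : En n | l p ≤ l x} := convex_halfSpace_ge l.isLinear _
  have hyfr : y ∈ frontier K := ⟨hy, fun hyint => hpy.not_gt (hl y hyint)⟩
  obtain ⟨z, hzint, hz⟩ := hK.nonempty_interior_inter hconv hface
    ⟨y, ⟨hyfr, hpy⟩, p, ⟨hp, le_refl (l p)⟩, hyp⟩
  exact hz.not_gt (hl z hzint)

end StrictConvexity

section QuadraticFunctions

/-- `f` is a quadratic function, that is, a polynomial function of degree at most two, whose
homogeneous part of degree two is the quadratic form `Q`. The lower-order terms are packaged as an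
affine map. -/
def HasQuadraticPart {V : Type*} [AddCommGroup V] [Module ℝ V] (f : V → ℝ)
    (Q : QuadraticForm ℝ V) : Prop :=
  ∃ l : V →ᵃ[ℝ] ℝ, ∀ x, f x = Q x + l x

namespace HasQuadraticPart

section Algebra

variable {V W : Type*} [AddCommGroup V] [Module ℝ V] [AddCommGroup W] [Module ℝ W]
  {f : V → ℝ} {Q : QuadraticForm ℝ V}

theorem neg (hf : HasQuadraticPart f Q) : HasQuadraticPart (-f) (-Q) := by
  obtain ⟨l, hl⟩ := hf
  exact ⟨-l, fun x => by simp [hl, add_comm]⟩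

theorem exists_add_smul_eq (hf : HasQuadraticPart f Q) (x v : V) :
    ∃ β : ℝ, ∀ t : ℝ, f (x + t • v) = f x + β * t + Q v * t ^ 2 := by
  obtain ⟨l, hl⟩ := hf
  refine ⟨QuadraticMap.polar Q x v + l.linear v, fun t => ?_⟩
  have hlin : l (x + t • v) = t * l.linear v + l x := by
    simpa [add_comm] using l.map_vadd x (t • v)
  rw [hl, hl, QuadraticMap.map_add Q, QuadraticMap.map_smul, QuadraticMap.polar_smul_right, hlin]
  simp only [smul_eq_mul]
  ring

theorem comp_affineMap (hf : HasQuadraticPart f Q) (g : W →ᵃ[ℝ] V) :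
    HasQuadraticPart (f ∘ g) (Q.comp g.linear) := by
  obtain ⟨l, hl⟩ := hf
  have hdecomp : ∀ x, g x = g.linear x + g 0 := congrFun g.decomp
  refine ⟨l.comp g + (QuadraticMap.polarBilin Q (g 0) ∘ₗ g.linear).toAffineMap +
    AffineMap.const ℝ W (Q (g 0)), fun x => ?_⟩
  simp only [Function.comp_apply, hl, AffineMap.coe_add, Pi.add_apply, AffineMap.comp_apply,
    LinearMap.coe_toAffineMap, LinearMap.comp_apply, QuadraticMap.polarBilin_apply_apply,
    AffineMap.const_apply, QuadraticMap.comp_apply]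
  rw [hdecomp x, QuadraticMap.map_add Q, QuadraticMap.polar_comm]
  ring

end Algebra

section Frontier

variable {V : Type*} [NormedAddCommGroup V] [NormedSpace ℝ V] {f : V → ℝ} {Q : QuadraticForm ℝ V}
  {A : Set V} {x : V}

theorem exists_pos_eq_neg_mul (hf : HasQuadraticPart f Q) (hA : IsBounded A)
    (hx : x ∈ interior A) (hfA : ∀ y ∈ frontier A, f y = 0) {v : V} (hv : v ≠ 0) :
    ∃ s > 0, f x = -(s * Q v) := by
  obtain ⟨β, hβ⟩ := hf.exists_add_smul_eq x v
  obtain ⟨t, ht, htA⟩ := exists_pos_add_smul_mem_frontier hA hx hv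
  obtain ⟨s, hs, hsA⟩ := exists_pos_add_smul_mem_frontier hA hx (neg_ne_zero.2 hv)
  have hroot_t := hβ t
  have hroot_s := hβ (-s)
  rw [hfA _ htA] at hroot_t
  rw [neg_smul, ← smul_neg, hfA _ hsA] at hroot_s
  -- On the line through `x` in direction `v`, `f` has the roots `t` and `-s`, whose product is
  -- `f x / Q v`.
  refine ⟨t * s, mul_pos ht hs, mul_left_cancel₀ (add_pos ht hs).ne' ?_⟩
  linear_combination -s * hroot_t - t * hroot_s

theorem posDef_of_neg (hf : HasQuadraticPart f Q) (hA : IsBounded A) (hx : x ∈ interior A)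
    (hfA : ∀ y ∈ frontier A, f y = 0) (hfx : f x < 0) : Q.PosDef := by
  intro v hv
  obtain ⟨s, hs, hfs⟩ := hf.exists_pos_eq_neg_mul hA hx hfA hv
  exact pos_of_mul_pos_right (by linarith) hs.le

theorem ne_zero_of_mem_interior (hf : HasQuadraticPart f Q) (hA : IsBounded A)
    (hx : x ∈ interior A) (hfA : ∀ y ∈ frontier A, f y = 0) (hQ : Q ≠ 0) : f x ≠ 0 := by
  intro hfx
  obtain ⟨v, hv⟩ := DFunLike.ne_iff.1 hQ
  have hv0 : v ≠ 0 := by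
    rintro rfl
    simp at hv
  obtain ⟨s, hs, hfs⟩ := hf.exists_pos_eq_neg_mul hA hx hfA hv0
  exact hv (by simpa [hfx, hs.ne'] using hfs)

theorem frontier_eq_setOf_eq_zero (hf : HasQuadraticPart f Q) (hA : IsBounded A)
    (hx : x ∈ interior A) (hfA : ∀ y ∈ frontier A, f y = 0) (hfx : f x < 0) :
    frontier A = {y | f y = 0} := by
  refine Subset.antisymm hfA fun y (hy : f y = 0) => ?_
  have hyx : y - x ≠ 0 := by
    rw [sub_ne_zero]
    rintro rfl
    exact hfx.ne hy
  have hpos : 0 < Q (y - x) := hf.posDef_of_neg hA hx hfA hfx _ hyx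
  obtain ⟨β, hβ⟩ := hf.exists_add_smul_eq x (y - x)
  obtain ⟨t, ht, htA⟩ := exists_pos_add_smul_mem_frontier hA hx hyx
  have hroot_t := hβ t
  have hroot_one := hβ 1
  rw [hfA _ htA] at hroot_t
  rw [one_smul, add_sub_cancel, hy] at hroot_one
  -- A convex parabola that is negative at `0` has only one positive root.
  have hprod : (t - 1) * (Q (y - x) * t - f x) = 0 := by
    linear_combination t * hroot_one - hroot_t
  have hfactor : 0 < Q (y - x) * t - f x := by
    have := mul_pos hpos ht
    linarith
  have ht1 : t = 1 := sub_eq_zero.1 ((mul_eq_zero.1 hprod).resolve_right hfactor.ne')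
  simpa [ht1] using htA

theorem exists_posDef_eq_setOf_eq_zero (hf : HasQuadraticPart f Q) (hQ : Q ≠ 0)
    (hA : IsBounded A) (hx : x ∈ interior A) {S : Set V} (hAS : frontier A ⊆ S)
    (hfS : ∀ y ∈ S, f y = 0) :
    ∃ g Q', HasQuadraticPart g Q' ∧ Q'.PosDef ∧ g x < 0 ∧ S = {y | g y = 0} := by
  have of_neg : ∀ {g : V → ℝ} {Q' : QuadraticForm ℝ V}, HasQuadraticPart g Q' →
      (∀ y ∈ S, g y = 0) → g x < 0 →
      ∃ g Q', HasQuadraticPart g Q' ∧ Q'.PosDef ∧ g x < 0 ∧ S = {y | g y = 0} := by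
    intro g Q' hg hgS hgx
    have hgA : ∀ y ∈ frontier A, g y = 0 := fun y hy => hgS y (hAS hy)
    have hfr := hg.frontier_eq_setOf_eq_zero hA hx hgA hgx
    exact ⟨g, Q', hg, hg.posDef_of_neg hA hx hgA hgx, hgx,
      Subset.antisymm hgS (hfr.symm.subset.trans hAS)⟩
  rcases (hf.ne_zero_of_mem_interior hA hx (fun y hy => hfS y (hAS hy)) hQ).lt_or_gt with hlt | hgt
  · exact of_neg hf hfS hlt
  · exact of_neg hf.neg (fun y hy => by simp [hfS y hy]) (by simpa using hgt)

end Frontier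

end HasQuadraticPart

theorem exists_linearEquiv_apply_eq_norm_sq_of_posDef {V : Type*} [AddCommGroup V] [Module ℝ V]
    [FiniteDimensional ℝ V] {Q : QuadraticForm ℝ V} (hQ : Q.PosDef) :
    ∃ T : En (Module.finrank ℝ V) ≃ₗ[ℝ] V, ∀ y, Q (T y) = ‖y‖ ^ 2 := by
  obtain ⟨w, hw, ⟨e⟩⟩ := QuadraticForm.equivalent_one_zero_neg_one_weighted_sum_squared Q
  have hw1 : ∀ i, w i = 1 := by
    intro i
    have hpos : 0 < Q (e.symm (Pi.single i 1)) := hQ _ (by simp)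
    rw [QuadraticMap.IsometryEquiv.map_app, QuadraticMap.weightedSumSquares_apply,
      Fintype.sum_eq_single i fun j hj => by simp [hj]] at hpos
    have hwi : 0 < w i := by simpa using hpos
    rcases hw i with h | h | h
    · linarith
    · linarith
    · exact h
  refine ⟨(WithLp.linearEquiv 2 ℝ _).trans e.symm.toLinearEquiv, fun y => ?_⟩
  calc Q (e.symm (WithLp.ofLp y)) = QuadraticMap.weightedSumSquares ℝ w (WithLp.ofLp y) :=
        e.symm.map_app _
    _ = ‖y‖ ^ 2 := by
        rw [EuclideanSpace.real_norm_sq_eq]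
        simp [QuadraticMap.weightedSumSquares_apply, hw1, sq]

theorem exists_setOf_norm_sq_add_eq_zero_eq_sphere {E : Type*} [NormedAddCommGroup E]
    [InnerProductSpace ℝ E] [FiniteDimensional ℝ E] (l : E →ᵃ[ℝ] ℝ) {x₀ : E}
    (hx₀ : ‖x₀‖ ^ 2 + l x₀ < 0) :
    ∃ c, ∃ r > 0, {y | ‖y‖ ^ 2 + l y = 0} = sphere c r := by
  let c : E := -(1 / 2 : ℝ) • (InnerProductSpace.toDual ℝ E).symm l.linear.toContinuousLinearMap
  have hsquare : ∀ y, ‖y‖ ^ 2 + l y = ‖y - c‖ ^ 2 - (‖c‖ ^ 2 - l 0) := by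
    intro y
    have hl : l y = l.linear y + l 0 := congrFun l.decomp y
    have hinner : ⟪y, c⟫ = -(1 / 2) * l.linear y := by
      rw [real_inner_smul_right, real_inner_comm, InnerProductSpace.toDual_symm_apply]
      rfl
    rw [norm_sub_sq_real, hl, hinner]
    ring
  have hradius : 0 < ‖c‖ ^ 2 - l 0 := by
    rw [hsquare] at hx₀
    linarith [sq_nonneg ‖x₀ - c‖]
  refine ⟨c, √(‖c‖ ^ 2 - l 0), Real.sqrt_pos.2 hradius, ?_⟩
  ext y
  rw [mem_sphere_iff_norm, eq_comm (a := ‖y - c‖),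
    Real.sqrt_eq_iff_eq_sq hradius.le (norm_nonneg _)]
  change ‖y‖ ^ 2 + l y = 0 ↔ _
  rw [hsquare, sub_eq_zero, eq_comm]

theorem exists_affineEquiv_image_sphere_eq {E : Type*} [NormedAddCommGroup E] [NormedSpace ℝ E]
    (c : E) {r : ℝ} (hr : 0 < r) : ∃ D : E ≃ᵃ[ℝ] E, D '' sphere 0 1 = sphere c r := by
  refine ⟨(LinearEquiv.smulOfNeZero ℝ E r hr.ne').toAffineEquiv.trans
    (AffineEquiv.constVAdd ℝ E c), ?_⟩
  rw [AffineEquiv.coe_trans, image_comp]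
  change c +ᵥ r • sphere (0 : E) 1 = sphere c r
  rw [smul_sphere' hr.ne', smul_zero, vadd_sphere]
  simp [abs_of_pos hr]

namespace HasQuadraticPart

theorem exists_image_sphere_eq_setOf_eq_zero {V : Type*} [AddCommGroup V] [Module ℝ V]
    [FiniteDimensional ℝ V] {f : V → ℝ} {Q : QuadraticForm ℝ V} (hf : HasQuadraticPart f Q)
    (hQ : Q.PosDef) {x₀ : V} (hx₀ : f x₀ < 0) :
    ∃ φ : En (Module.finrank ℝ V) →ᵃ[ℝ] V,
      Function.Injective φ ∧ φ '' sphere 0 1 = {x | f x = 0} := by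
  obtain ⟨T, hT⟩ := exists_linearEquiv_apply_eq_norm_sq_of_posDef hQ
  obtain ⟨l, hl⟩ := hf
  have hfT : ∀ y, f (T y) = ‖y‖ ^ 2 + l.comp T.toLinearMap.toAffineMap y := fun y => by
    simp [hl, hT]
  obtain ⟨c, r, hr, hsphere⟩ := exists_setOf_norm_sq_add_eq_zero_eq_sphere
    (l.comp T.toLinearMap.toAffineMap) (x₀ := T.symm x₀) (by rw [← hfT]; simpa using hx₀)
  obtain ⟨D, hD⟩ := exists_affineEquiv_image_sphere_eq c hr
  refine ⟨T.toLinearMap.toAffineMap.comp D, T.injective.comp D.injective, ?_⟩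
  calc T ∘ D '' sphere 0 1 = T '' {y | f (T y) = 0} := by
        simp only [image_comp, hD, ← hsphere, hfT]
    _ = {x | f x = 0} := image_preimage_eq {x | f x = 0} T.surjective

theorem exists_image_sphere_eq_setOf_eq_zero_inter {V : Type*} [AddCommGroup V] [Module ℝ V]
    [FiniteDimensional ℝ V] {f : V → ℝ} {Q : QuadraticForm ℝ V} (hf : HasQuadraticPart f Q)
    (hQ : Q.PosDef) {P : AffineSubspace ℝ V} {x₀ : V} (hx₀P : x₀ ∈ P) (hx₀ : f x₀ < 0) :
    ∃ φ : En (Module.finrank ℝ P.direction) →ᵃ[ℝ] V,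
      Function.Injective φ ∧ φ '' sphere 0 1 = {x | f x = 0} ∩ P := by
  let ι : P.direction →ᵃ[ℝ] V := P.direction.subtype.toAffineMap + AffineMap.const ℝ _ x₀
  have hι : ∀ w, ι w = w +ᵥ x₀ := fun w => rfl
  have hιinj : Function.Injective ι := fun w w' h => Subtype.ext (vadd_right_cancel x₀ h)
  have hιrange : range ι = P := by
    ext x
    refine ⟨?_, fun hx => ⟨⟨x -ᵥ x₀, P.vsub_mem_direction hx hx₀P⟩, vsub_vadd x x₀⟩⟩
    rintro ⟨w, rfl⟩
    exact P.vadd_mem_of_mem_direction w.2 hx₀P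
  have hQι : (Q.comp ι.linear).PosDef := fun w hw => hQ _ (by simpa [ι] using hw)
  obtain ⟨φ, hφ, himage⟩ := (hf.comp_affineMap ι).exists_image_sphere_eq_setOf_eq_zero hQι
    (x₀ := 0) (by simpa [hι] using hx₀)
  refine ⟨ι.comp φ, hιinj.comp hφ, ?_⟩
  calc ι ∘ φ '' sphere 0 1 = ι '' (ι ⁻¹' {x | f x = 0}) := by rw [image_comp, himage]; rfl
    _ = {x | f x = 0} ∩ P := by rw [image_preimage_eq_inter_range, hιrange]

end HasQuadraticPart

end QuadraticFunctions

section ConvexQuadrics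

theorem toQuadraticForm'_ne_zero_of_isSymm {R ι : Type*} [CommRing R] [Invertible (2 : R)]
    [Fintype ι] [DecidableEq ι] {a : Matrix ι ι R} (hsymm : a.IsSymm) (ha : a ≠ 0) :
    a.toQuadraticForm' ≠ 0 := by
  intro hzero
  let B : LinearMap.BilinForm R (ι → R) := Matrix.toLinearMap₂' R a
  have hBsymm : ∀ x y, B x y = B y x := fun x y => by
    simp only [B, Matrix.toLinearMap₂'_apply']
    rw [Matrix.dotProduct_mulVec, ← Matrix.mulVec_transpose, hsymm.eq, dotProduct_comm]
  have hB : B = 0 := calc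
    B = QuadraticMap.associatedHom R a.toQuadraticForm' :=
      (QuadraticMap.associated_left_inverse R hBsymm).symm
    _ = 0 := by rw [hzero, map_zero]
  exact ha ((Matrix.toLinearMap₂' R).map_eq_zero_iff.1 hB)

theorem IsQuadricSurface.isClosed {m : ℕ} {S : Set (En m)} (hS : IsQuadricSurface S) :
    IsClosed S := by
  obtain ⟨a, b, c, -, -, rfl⟩ := hS
  exact isClosed_eq (by fun_prop) continuous_const

theorem IsQuadricSurface.exists_hasQuadraticPart {m : ℕ} {S : Set (En m)}
    (hS : IsQuadricSurface S) :
    ∃ f Q, HasQuadraticPart f Q ∧ Q ≠ 0 ∧ S = {x | f x = 0} := by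
  obtain ⟨a, b, c, hsymm, ha, rfl⟩ := hS
  refine ⟨_, a.toQuadraticForm'.comp (WithLp.linearEquiv 2 ℝ (Fin m → ℝ)).toLinearMap,
    ⟨(2 • innerₗ (En m) (WithLp.toLp 2 b)).toAffineMap + AffineMap.const ℝ _ c, fun x => ?_⟩, ?_,
    rfl⟩
  · simp [Matrix.toQuadraticForm', Matrix.toLinearMap₂'_apply, PiLp.inner_apply, add_assoc,
      mul_comm, mul_left_comm, mul_assoc]
  · intro hzero
    refine toQuadraticForm'_ne_zero_of_isSymm hsymm ha (QuadraticMap.ext fun x => ?_)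
    exact DFunLike.congr_fun hzero (WithLp.toLp 2 x)

namespace IsConvexQuadric

variable {m : ℕ} {S : Set (En m)}

theorem nontrivial (hS : IsConvexQuadric S) (hm : 2 ≤ m) : S.Nontrivial := by
  obtain ⟨Q, _, ⟨hQ, q, hq⟩, ⟨x, hx, rfl⟩, hconv, rfl⟩ := hS
  have hrank : 1 < Module.rank ℝ (En m) := by
    rw [← Module.finrank_eq_rank, finrank_euclideanSpace_fin]
    exact_mod_cast hm
  refine nontrivial_frontier_of_isOpen_of_convex hrank hQ.isClosed.isOpen_compl.connectedComponentIn
    hconv ⟨x, mem_connectedComponentIn hx⟩ fun huniv => ?_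
  have hqmem : q ∈ connectedComponentIn Qᶜ x := huniv ▸ mem_univ q
  exact connectedComponentIn_subset _ _ hqmem hq

theorem exists_hasQuadraticPart (hS : IsConvexQuadric S) :
    ∃ f Q, HasQuadraticPart f Q ∧ Q ≠ 0 ∧ ∀ x ∈ S, f x = 0 := by
  obtain ⟨_, _, ⟨hQ, -⟩, ⟨x, -, rfl⟩, -, rfl⟩ := hS
  obtain ⟨f, q, hf, hq, rfl⟩ := hQ.exists_hasQuadraticPart
  refine ⟨f, q, hf, hq, fun y hy => ?_⟩
  exact not_not.1 (frontier_connectedComponentIn_subset hQ.isClosed.isOpen_compl x hy)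

end IsConvexQuadric

theorem IsConvexQuadricIn.nontrivial {n : ℕ} {H S : Set (En n)} (hS : IsConvexQuadricIn H S)
    (hn : 3 ≤ n) : S.Nontrivial := by
  obtain ⟨-, φ, -, hquad⟩ := hS
  exact ((hquad.nontrivial (by lia)).image φ.injective).mono (image_preimage_subset _ _)

theorem finrank_direction_comap_of_subset_range {k V W : Type*} [Field k] [AddCommGroup V]
    [Module k V] [AddCommGroup W] [Module k W] {f : V →ᵃ[k] W} (hf : Function.Injective f)
    {P : AffineSubspace k W} (hP : (P : Set W) ⊆ range f) :
    Module.finrank k (P.comap f).direction = Module.finrank k P.direction := by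
  have hmap : (P.comap f).map f = P := by
    apply SetLike.coe_injective
    rw [AffineSubspace.coe_map, AffineSubspace.coe_comap, image_preimage_eq_of_subset hP]
  have hlin : Function.Injective f.linear := f.linear_injective_iff.2 hf
  calc Module.finrank k (P.comap f).direction
      = Module.finrank k ((P.comap f).direction.map f.linear) :=
        (Submodule.equivMapOfInjective _ hlin _).finrank_eq
    _ = Module.finrank k P.direction := by rw [← AffineSubspace.map_direction, hmap]

theorem IsConvexQuadricIn.isEllipsoidDim_frontier_inter {n : ℕ} {K H : Set (En n)}
    (hKH : IsConvexQuadricIn H (frontier K ∩ H)) (hbdd : IsBounded (K ∩ H))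
    {P : AffineSubspace ℝ (En n)} (hPH : (P : Set (En n)) ⊆ H) {z : En n} (hzP : z ∈ P)
    (hz : z ∈ interior K) :
    IsEllipsoidDim (Module.finrank ℝ P.direction) (frontier K ∩ P) := by
  obtain ⟨-, φ, rfl, hquad⟩ := hKH
  obtain ⟨x₀, rfl⟩ := hPH hzP
  have hpre : φ ⁻¹' (frontier K ∩ range φ) = φ ⁻¹' frontier K := preimage_inter_range
  rw [hpre] at hquad
  have hA : IsBounded (φ ⁻¹' K) := by
    rw [← preimage_inter_range]
    exact φ.isometry.antilipschitz.isBounded_preimage hbdd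
  have hx₀ : x₀ ∈ interior (φ ⁻¹' K) := preimage_interior_subset_interior_preimage φ.continuous hz
  obtain ⟨f, Q, hf, hQ, hfS⟩ := hquad.exists_hasQuadraticPart
  obtain ⟨g, Q', hg, hQ', hgx₀, hgS⟩ := hf.exists_posDef_eq_setOf_eq_zero hQ hA hx₀
    (φ.continuous.frontier_preimage_subset K) hfS
  obtain ⟨ψ, hψ, himage⟩ := hg.exists_image_sphere_eq_setOf_eq_zero_inter hQ'
    (P := P.comap φ.toAffineMap) (x₀ := x₀) hzP hgx₀
  rw [← finrank_direction_comap_of_subset_range (f := φ.toAffineMap) φ.injective hPH]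
  refine ⟨φ.toAffineMap.comp ψ, φ.injective.comp hψ, ?_⟩
  calc frontier K ∩ P = φ '' (φ ⁻¹' (frontier K ∩ P)) :=
        (image_preimage_eq_of_subset (inter_subset_right.trans hPH)).symm
    _ = φ '' ({x | g x = 0} ∩ P.comap φ.toAffineMap) := by rw [← hgS]; rfl
    _ = φ.toAffineMap.comp ψ '' sphere 0 1 := by rw [← himage, ← image_comp]; rfl

theorem mem_orthogonal_span_range_iff {E ι : Type*} [NormedAddCommGroup E]
    [InnerProductSpace ℝ E] {v : ι → E} {x : E} :
    x ∈ (Submodule.span ℝ (range v))ᗮ ↔ ∀ i, ⟪x, v i⟫ = 0 := by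
  rw [← Submodule.span_singleton_le_iff_mem, ← Submodule.isOrtho_iff_le, Submodule.isOrtho_span]
  simp

theorem IsConvexQuadricIn.isEllipsoidDim_frontier_inter_setOf_inner_eq {n : ℕ} {K H : Set (En n)}
    (hKH : IsConvexQuadricIn H (frontier K ∩ H)) (hbdd : IsBounded (K ∩ H)) {z : En n}
    (hz : z ∈ interior K) {ι : Type*} [Fintype ι] {v : ι → En n} (hv : LinearIndependent ℝ v)
    (hvH : {x | ∀ i, ⟪x, v i⟫ = ⟪z, v i⟫} ⊆ H) :
    IsEllipsoidDim (n - Fintype.card ι) (frontier K ∩ {x | ∀ i, ⟪x, v i⟫ = ⟪z, v i⟫}) := by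
  let P : AffineSubspace ℝ (En n) := AffineSubspace.mk' z (Submodule.span ℝ (range v))ᗮ
  have hP : (P : Set (En n)) = {x | ∀ i, ⟪x, v i⟫ = ⟪z, v i⟫} := by
    ext x
    simp [P, AffineSubspace.mem_mk', mem_orthogonal_span_range_iff, inner_sub_left, sub_eq_zero]
  have hdim : Module.finrank ℝ P.direction = n - Fintype.card ι := by
    have hsum := (Submodule.span ℝ (range v)).finrank_add_finrank_orthogonal
    rw [finrank_span_eq_card hv, finrank_euclideanSpace_fin] at hsum
    rw [AffineSubspace.direction_mk']
    exact Nat.eq_sub_of_add_eq' hsum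
  rw [← hP, ← hdim]
  exact hKH.isEllipsoidDim_frontier_inter hbdd (hP.trans_subset hvH)
    (AffineSubspace.self_mem_mk' _ _) hz

theorem isEllipsoidDim_frontier_inter_sphHyp {n : ℕ} {K : Set (En n)}
    {δ : sphere (0 : En n) 1 → ℝ} {u : sphere (0 : En n) 1}
    (hu : IsConvexQuadricIn (sphHyp δ u) (frontier K ∩ sphHyp δ u))
    (hbdd : IsBounded (K ∩ sphHyp δ u)) {z : En n} (hz : z ∈ interior K) (hzu : z ∈ sphHyp δ u) :
    IsEllipsoidDim (n - 1) (frontier K ∩ sphHyp δ u) := by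
  have hind : LinearIndependent ℝ ![(u : En n)] :=
    LinearIndependent.of_subsingleton 0 (ne_zero_of_mem_unit_sphere u)
  have hset : sphHyp δ u = {x | ∀ i, ⟪x, ![(u : En n)] i⟫ = ⟪z, ![(u : En n)] i⟫} := by
    simp [sphHyp, show ⟪z, (u : En n)⟫ = δ u from hzu]
  rw [hset]
  exact hu.isEllipsoidDim_frontier_inter_setOf_inner_eq hbdd hz hind hset.superset

theorem isEllipsoidDim_frontier_inter_sphHyp_inter_sphHyp {n : ℕ} {K : Set (En n)}
    {δ : sphere (0 : En n) 1 → ℝ} {u₁ u₂ : sphere (0 : En n) 1}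
    (hu₁ : IsConvexQuadricIn (sphHyp δ u₁) (frontier K ∩ sphHyp δ u₁))
    (hbdd : IsBounded (K ∩ sphHyp δ u₁)) (hind : LinearIndependent ℝ ![(u₁ : En n), u₂])
    {z : En n} (hz : z ∈ interior K) (hz₁ : z ∈ sphHyp δ u₁) (hz₂ : z ∈ sphHyp δ u₂) :
    IsEllipsoidDim (n - 2) (frontier K ∩ (sphHyp δ u₁ ∩ sphHyp δ u₂)) := by
  have hset : sphHyp δ u₁ ∩ sphHyp δ u₂ =
      {x | ∀ i, ⟪x, ![(u₁ : En n), u₂] i⟫ = ⟪z, ![(u₁ : En n), u₂] i⟫} := by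
    ext x
    simp [sphHyp, Fin.forall_fin_two, show ⟪z, (u₁ : En n)⟫ = δ u₁ from hz₁,
      show ⟪z, (u₂ : En n)⟫ = δ u₂ from hz₂]
  rw [hset]
  exact hu₁.isEllipsoidDim_frontier_inter_setOf_inner_eq hbdd hz hind
    (hset.superset.trans inter_subset_left)

end ConvexQuadrics

section TwoDirections

theorem exists_norm_eq_and_apply_neg_eq {V : Type*} [NormedAddCommGroup V] [NormedSpace ℝ V]
    (hV : 1 < Module.rank ℝ V) {f : V → ℝ} (hf : Continuous f) {r : ℝ} (hr : 0 ≤ r) :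
    ∃ w, ‖w‖ = r ∧ f (-w) = f w := by
  have : Nontrivial V := rank_pos_iff_nontrivial.1 (zero_lt_one.trans hV)
  have of_le : ∀ w : V, ‖w‖ = r → f (-w) ≤ f w → ∃ w, ‖w‖ = r ∧ f (-w) = f w := by
    intro w hw hle
    obtain ⟨w', hw', heq⟩ := (isPreconnected_sphere hV (0 : V) r).intermediate_value₂
      (f := fun x => f (-x)) (g := f) (by simpa using hw)
      (by simpa using hw : -w ∈ sphere (0 : V) r) (by fun_prop) hf.continuousOn hle
      (by simpa using hle)
    exact ⟨w', by simpa using hw', heq⟩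
  obtain ⟨w, hw⟩ := exists_norm_eq V hr
  rcases le_total (f (-w)) (f w) with hle | hle
  · exact of_le w hw hle
  · exact of_le (-w) (by simpa using hw) (by simpa using hle)

variable {E : Type*} [NormedAddCommGroup E] [InnerProductSpace ℝ E]

theorem inner_add_orthogonal (u : sphere (0 : E) 1) (w : (ℝ ∙ (u : E))ᗮ) :
    ⟪(u : E), u + w⟫ = 1 := by
  rw [inner_add_right, Submodule.mem_orthogonal_singleton_iff_inner_right.1 w.2,
    real_inner_self_eq_norm_sq, norm_eq_of_mem_sphere]
  norm_num

theorem norm_add_orthogonal_pos (u : sphere (0 : E) 1) (w : (ℝ ∙ (u : E))ᗮ) :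
    0 < ‖(u + w : E)‖ := by
  rw [norm_pos_iff]
  intro h
  simpa [h] using inner_add_orthogonal u w

/-- The direction of `u + w`, where `w` is a tangent vector of the unit sphere at `u`: the inverse
of the central projection of the open hemisphere around `u` to its tangent space. -/
def tilt (u : sphere (0 : E) 1) (w : (ℝ ∙ (u : E))ᗮ) : sphere (0 : E) 1 :=
  ⟨‖(u + w : E)‖⁻¹ • (u + w : E), by
    rw [mem_sphere_zero_iff_norm, norm_smul, norm_inv, norm_norm,
      inv_mul_cancel₀ (norm_add_orthogonal_pos u w).ne']⟩

/-- The signed distance, measured along `u`, from `p` to the hyperplane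
`{x | ⟪x, tilt u w⟫ = δ (tilt u w)}`. -/
def tiltHeight (δ : sphere (0 : E) 1 → ℝ) (p : E) (u : sphere (0 : E) 1)
    (w : (ℝ ∙ (u : E))ᗮ) : ℝ :=
  ‖(u + w : E)‖ * δ (tilt u w) - ⟪p, u + w⟫

theorem continuous_tilt (u : sphere (0 : E) 1) : Continuous (tilt u) := by
  have hnorm : ∀ w : (ℝ ∙ (u : E))ᗮ, ‖(u + w : E)‖ ≠ 0 := fun w => (norm_add_orthogonal_pos u w).ne'
  unfold tilt
  fun_prop (disch := exact hnorm _)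

theorem tilt_zero (u : sphere (0 : E) 1) : tilt u 0 = u := by
  ext
  simp [tilt]

theorem linearIndependent_tilt_tilt_neg (u : sphere (0 : E) 1) {w : (ℝ ∙ (u : E))ᗮ}
    (hw : w ≠ 0) : LinearIndependent ℝ ![(tilt u w : E), tilt u (-w)] := by
  have horth : ⟪(u : E), w⟫ = 0 := Submodule.mem_orthogonal_singleton_iff_inner_right.1 w.2
  have huw : LinearIndependent ℝ ![(u : E), w] :=
    linearIndependent_of_ne_zero_of_inner_eq_zero
      (by simp [Fin.forall_fin_two, hw, ne_zero_of_mem_unit_sphere])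
      (by simp [Pairwise, Fin.forall_fin_two, horth, real_inner_comm])
  have htilt : ![(tilt u w : E), tilt u (-w)] =
      ![‖(u + w : E)‖⁻¹ • ((1 : ℝ) • (u : E) + (1 : ℝ) • (w : E)),
        ‖(u - w : E)‖⁻¹ • ((1 : ℝ) • (u : E) + (-1 : ℝ) • (w : E))] := by
    simp [tilt, ← sub_eq_add_neg]
  have hpos := norm_add_orthogonal_pos u w
  have hneg : 0 < ‖(u - w : E)‖ := by
    simpa [← sub_eq_add_neg] using norm_add_orthogonal_pos u (-w)
  rw [htilt, LinearIndependent.pair_smul_smul_iff (inv_pos.2 hpos).ne'.isUnit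
    (inv_pos.2 hneg).ne'.isUnit, LinearIndependent.pair_add_smul_add_smul_iff]
  exact ⟨huw, by norm_num⟩

theorem continuous_tiltHeight {δ : sphere (0 : E) 1 → ℝ} (hδ : Continuous δ) (p : E)
    (u : sphere (0 : E) 1) : Continuous (tiltHeight δ p u) := by
  have := continuous_tilt u
  unfold tiltHeight
  fun_prop

theorem tiltHeight_zero {δ : sphere (0 : E) 1 → ℝ} {p : E} {u : sphere (0 : E) 1}
    (hp : ⟪p, (u : E)⟫ = δ u) : tiltHeight δ p u 0 = 0 := by
  simp [tiltHeight, tilt_zero, hp]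

theorem inner_add_tiltHeight_smul (δ : sphere (0 : E) 1 → ℝ) (p : E) (u : sphere (0 : E) 1)
    (w : (ℝ ∙ (u : E))ᗮ) :
    ⟪p + tiltHeight δ p u w • (u : E), (tilt u w : E)⟫ = δ (tilt u w) := by
  have hne := (norm_add_orthogonal_pos u w).ne'
  calc ⟪p + tiltHeight δ p u w • (u : E), (tilt u w : E)⟫
      = ‖(u + w : E)‖⁻¹ * (⟪p, u + w⟫ + tiltHeight δ p u w * ⟪(u : E), u + w⟫) := by
        rw [← real_inner_smul_left, ← inner_add_left, ← real_inner_smul_right]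
        rfl
    _ = δ (tilt u w) := by
        rw [inner_add_orthogonal, tiltHeight]
        field_simp
        ring

theorem one_lt_rank_orthogonal_span_singleton (hE : 2 < Module.finrank ℝ E) (x : E) :
    1 < Module.rank ℝ (ℝ ∙ x)ᗮ := by
  have : FiniteDimensional ℝ E := Module.finite_of_finrank_pos (by lia)
  have hsum := (ℝ ∙ x).finrank_add_finrank_orthogonal
  have hspan : Module.finrank ℝ (ℝ ∙ x) ≤ 1 := by
    simpa using finrank_span_le_card (R := ℝ) ({x} : Set E)
  have : 1 < Module.finrank ℝ (ℝ ∙ x)ᗮ := by omega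
  rw [← Module.finrank_eq_rank]
  exact_mod_cast this

theorem exists_linearIndependent_pair_hyperplanes_inter (hE : 2 < Module.finrank ℝ E)
    {δ : sphere (0 : E) 1 → ℝ} (hδ : Continuous δ) {O : Set E} (hO : IsOpen O) {p : E}
    (hpO : p ∈ O) {u : sphere (0 : E) 1} (hp : ⟪p, (u : E)⟫ = δ u)
    {P : sphere (0 : E) 1 → Prop} (hP : ∀ᶠ v in 𝓝 u, P v) :
    ∃ u₁ u₂, P u₁ ∧ P u₂ ∧ LinearIndependent ℝ ![(u₁ : E), u₂] ∧
      ∃ z ∈ O, ⟪z, (u₁ : E)⟫ = δ u₁ ∧ ⟪z, (u₂ : E)⟫ = δ u₂ := by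
  let z : (ℝ ∙ (u : E))ᗮ → E := fun w => p + tiltHeight δ p u w • (u : E)
  have hz : Tendsto z (𝓝 0) (𝓝 p) := by
    have hcont : Continuous z := by
      have := continuous_tiltHeight hδ p u
      fun_prop
    simpa [z, tiltHeight_zero hp] using hcont.tendsto 0
  have htilt : Tendsto (tilt u) (𝓝 0) (𝓝 u) := by
    simpa [tilt_zero] using (continuous_tilt u).tendsto 0
  have hnear : ∀ᶠ w in 𝓝 0, z w ∈ O ∧ P (tilt u w) :=
    (hz.eventually_mem (hO.mem_nhds hpO)).and (htilt.eventually hP)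
  obtain ⟨r, hr, hball⟩ := Metric.eventually_nhds_iff.1 hnear
  obtain ⟨w, hwr, heq⟩ := exists_norm_eq_and_apply_neg_eq
    (one_lt_rank_orthogonal_span_singleton hE (u : E)) (continuous_tiltHeight hδ p u)
    (half_pos hr).le
  have hw0 : w ≠ 0 := norm_pos_iff.1 (by linarith)
  obtain ⟨hzO, hPw⟩ := hball (y := w) (by simp [hwr, hr])
  obtain ⟨-, hPnegw⟩ := hball (y := -w) (by simp [hwr, hr])
  exact ⟨tilt u w, tilt u (-w), hPw, hPnegw, linearIndependent_tilt_tilt_neg u hw0, z w, hzO,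
    inner_add_tiltHeight_smul δ p u w,
    by simpa only [heq] using inner_add_tiltHeight_smul δ p u (-w)⟩

end TwoDirections

theorem exist_two_ellipsoid_sections_general {n : ℕ} (hn : 3 ≤ n) {K : Set (En n)}
    (hKconv : Convex ℝ K) (hKsc : IsStrictlyConvexSet K) {δ : sphere (0 : En n) 1 → ℝ}
    (hδ : Continuous δ)
    (hsec : ∀ u, IsConvexQuadricIn (sphHyp δ u) (frontier K ∩ sphHyp δ u)) :
    ∃ u₁ u₂ : sphere (0 : En n) 1,
      IsEllipsoidDim (n - 1) (frontier K ∩ sphHyp δ u₁) ∧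
      IsEllipsoidDim (n - 1) (frontier K ∩ sphHyp δ u₂) ∧
      IsEllipsoidDim (n - 2) ((frontier K ∩ sphHyp δ u₁) ∩ (frontier K ∩ sphHyp δ u₂)) := by
  have : NeZero n := ⟨by lia⟩
  have hntriv : ∀ u, (frontier K ∩ sphHyp δ u).Nontrivial := fun u => (hsec u).nontrivial hn
  have hmeet : ∀ u, (interior K ∩ sphHyp δ u).Nonempty := fun u =>
    hKsc.nonempty_interior_inter hKconv (convex_setOf_inner_eq _ _) (hntriv u)
  obtain ⟨u⟩ : Nonempty (sphere (0 : En n) 1) :=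
    (NormedSpace.sphere_nonempty.2 zero_le_one).to_subtype
  obtain ⟨q, hq, -⟩ := (hntriv u).nonempty
  have hexp : ((closure K).exposedPoints ℝ).Nonempty :=
    ⟨q, hKsc.frontier_subset_exposedPoints_closure hKconv (hmeet u).left hq⟩
  obtain ⟨u₀, hbdd⟩ := exists_eventually_isBounded_inter_setOf_inner_eq hKconv hexp
  obtain ⟨p, hpK, hp⟩ := hmeet u₀
  obtain ⟨u₁, u₂, hbdd₁, hbdd₂, hind, z, hzK, hz₁, hz₂⟩ :=
    exists_linearIndependent_pair_hyperplanes_inter (by simpa using Nat.lt_of_succ_le hn) hδ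
      isOpen_interior hpK hp hbdd
  refine ⟨u₁, u₂, isEllipsoidDim_frontier_inter_sphHyp (hsec u₁) (hbdd₁ _) hzK hz₁,
    isEllipsoidDim_frontier_inter_sphHyp (hsec u₂) (hbdd₂ _) hzK hz₂, ?_⟩
  rw [← inter_inter_distrib_left]
  exact isEllipsoidDim_frontier_inter_sphHyp_inter_sphHyp (hsec u₁) (hbdd₁ _) hind hzK hz₁ hz₂

/-- Lemma 8: under the hypotheses of Theorem 2 with K strictly convex and
regular, there are two hyperplanes H(u₁), H(u₂) whose sections of the frontier of K are
(n−1)-dimensional ellipsoids intersecting in an (n−2)-dimensional ellipsoid. -/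
theorem exist_two_ellipsoid_sections
    {n : ℕ} (hn : 3 ≤ n) (K : Set (En n)) (hKconv : Convex ℝ K) (hKcl : IsClosed K)
    (hKint : (interior K).Nonempty) (hKne : K ≠ Set.univ)
    (hKsc : IsStrictlyConvexSet K) (hKreg : IsRegularSet K)
    (δ : sphere (0 : En n) 1 → ℝ) (hδ : Continuous δ)
    (hsec : ∀ u : sphere (0 : En n) 1,
      IsConvexQuadricIn (sphHyp δ u) (frontier K ∩ sphHyp δ u)) :
    ∃ u₁ u₂ : sphere (0 : En n) 1,
      IsEllipsoidDim (n - 1) (frontier K ∩ sphHyp δ u₁) ∧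
      IsEllipsoidDim (n - 1) (frontier K ∩ sphHyp δ u₂) ∧
      IsEllipsoidDim (n - 2) ((frontier K ∩ sphHyp δ u₁) ∩ (frontier K ∩ sphHyp δ u₂)) := by
  exact exist_two_ellipsoid_sections_general hn hKconv hKsc hδ hsec
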